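/- For x ∈ ℝ and i ∈ ℤ let E_i h(x) denote the average of h over the dyadic interval of length 2^{−i} containing x, and set Δ_i := E_i − E_{i−1} (the Haar/martingale-difference projection at scale 2^{1−i}). There exists an absolute constant C such that for all f, g ∈ L^2(ℝ) and every jump collection (N_k)_{k≥0} which is a stopping time — i.e., for every k and x, the function N_k is constant on the dyadic interval of length 2^{−N_k(x)} containing x — one has ∫_ℝ Σ_{k≥1} | Σ_{N_{k−1}(x) < i < j ≤ N_k(x)} Δ_i f(x) · Δ_j g(x) | dx ≤ C ‖f‖_{L^2} ‖g‖_{L^2}. -/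

import Mathlib

open MeasureTheory ENNReal
open scoped NNReal

noncomputable section

/-- The average `E_i h (x)` of `h` over the dyadic interval of length `2^(-i)`
containing `x`. -/
def dyadicAvg (i : ℤ) (h : ℝ → ℝ) (x : ℝ) : ℝ :=
  (2 : ℝ) ^ i *
    ∫ y in Set.Ico ((⌊x * (2 : ℝ) ^ i⌋ : ℝ) * (2 : ℝ) ^ (-i))
      (((⌊x * (2 : ℝ) ^ i⌋ : ℝ) + 1) * (2 : ℝ) ^ (-i)), h y

/-- The martingale difference (Haar projection) `Δ_i = E_i - E_(i-1)` at scale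
`2^(1-i)`. -/
def dyadicDiff (i : ℤ) (h : ℝ → ℝ) (x : ℝ) : ℝ :=
  dyadicAvg i h x - dyadicAvg (i - 1) h x

/-- `Nk` is a stopping time: for every `k` and `x`, the function `Nk k` is constant on
the dyadic interval of length `2^(-Nk k x)` containing `x`. -/
def IsStoppingJump (Nk : ℕ → ℝ → ℤ) : Prop :=
  (∀ k, Measurable (Nk k)) ∧ (∀ (k : ℕ) (x : ℝ), Nk k x ≤ Nk (k + 1) x) ∧
  ∀ (k : ℕ) (x y : ℝ),
    y ∈ Set.Ico ((⌊x * (2 : ℝ) ^ (Nk k x)⌋ : ℝ) * (2 : ℝ) ^ (-(Nk k x)))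
        (((⌊x * (2 : ℝ) ^ (Nk k x)⌋ : ℝ) + 1) * (2 : ℝ) ^ (-(Nk k x))) →
    Nk k y = Nk k x

open Filter Topology

/-!
Between two stopping times `σ ≤ τ` the Haar differences `α j` of `f` and `β j` of `g` at scales
`σ < j ≤ τ` are still constant on dyadic intervals of length `2^(-j)` and odd under the exchange of
dyadic siblings. The partial sums `F n` of `α` and the partial paraproducts `P n` satisfy
`P (n + 1) = P n + F n * β (n + 1)`, and the Bellman function `‖P + i F²‖` dominates `|P|`. By the
parallelogram law, its mean over two siblings grows by at most `3 (α² + β²)` from one scale to the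
next. Hence each tree contributes at most three times the square norms of its Haar differences.
Different trees use disjoint ranges of scales at each point, so by Bessel's inequality all of them
together contribute at most `3 (‖f‖² + ‖g‖²)`. Replacing `f`, `g` by `c f`, `c⁻¹ g` and optimizing
in `c` turns the sum of squares into a product.
-/

/-! ### Dyadic intervals -/

/-- The position `m` of the dyadic interval `[m 2^(-n), (m + 1) 2^(-n))` that contains `x`. A
function is constant on the dyadic intervals of length `2^(-n)` iff it factors through
`dyadicIndex n`. -/
def dyadicIndex (n : ℤ) (x : ℝ) : ℤ := ⌊x * (2 : ℝ) ^ n⌋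

/-- The dyadic interval `[m 2^(-n), (m + 1) 2^(-n))`. -/
def dyadicInterval (n m : ℤ) : Set ℝ :=
  Set.Ico ((m : ℝ) * (2 : ℝ) ^ (-n)) (((m : ℝ) + 1) * (2 : ℝ) ^ (-n))

/-- The translate of `x` by `± 2^(-n)` that lies in the other half of the dyadic interval of
length `2^(1-n)` around `x`. -/
def dyadicSibling (n : ℤ) (x : ℝ) : ℝ :=
  if Even (dyadicIndex n x) then x + (2 : ℝ) ^ (-n) else x - (2 : ℝ) ^ (-n)

section DyadicIntervals

variable {m n : ℤ} {x y : ℝ}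

lemma mem_dyadicInterval : y ∈ dyadicInterval n m ↔ dyadicIndex n y = m := by
  have h2 : (0 : ℝ) < 2 ^ n := by positivity
  rw [dyadicInterval, dyadicIndex, Set.mem_Ico, Int.floor_eq_iff, zpow_neg, ← div_eq_mul_inv,
    ← div_eq_mul_inv, div_le_iff₀ h2, lt_div_iff₀ h2]

lemma measurable_dyadicIndex (n : ℤ) : Measurable (dyadicIndex n) :=
  Int.measurable_floor.comp (measurable_id.mul_const _)

lemma measurableSet_dyadicInterval (n m : ℤ) : MeasurableSet (dyadicInterval n m) :=
  measurableSet_Ico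

lemma volume_real_dyadicInterval (n m : ℤ) : volume.real (dyadicInterval n m) = 2 ^ (-n) := by
  rw [dyadicInterval, Real.volume_real_Ico_of_le (by gcongr; linarith)]
  ring

lemma dyadicIndex_sub_one (n : ℤ) (x : ℝ) : dyadicIndex (n - 1) x = dyadicIndex n x / 2 := by
  rw [dyadicIndex, dyadicIndex, zpow_sub_one₀ two_ne_zero, ← mul_assoc, ← div_eq_mul_inv]
  exact_mod_cast Int.floor_div_natCast (x * 2 ^ n) 2

lemma dyadicIndex_eq_of_le (hmn : m ≤ n) (hxy : dyadicIndex n x = dyadicIndex n y) :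
    dyadicIndex m x = dyadicIndex m y := by
  induction m, hmn using Int.leInductionDown with
  | base => exact hxy
  | pred k _ ih => rw [dyadicIndex_sub_one, dyadicIndex_sub_one, ih]

lemma dyadicIndex_add_zpow (n : ℤ) (x : ℝ) :
    dyadicIndex n (x + 2 ^ (-n)) = dyadicIndex n x + 1 := by
  rw [dyadicIndex, add_mul, zpow_neg, inv_mul_cancel₀ (by positivity), Int.floor_add_one,
    dyadicIndex]

lemma dyadicIndex_sub_zpow (n : ℤ) (x : ℝ) :
    dyadicIndex n (x - 2 ^ (-n)) = dyadicIndex n x - 1 := by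
  rw [dyadicIndex, sub_mul, zpow_neg, inv_mul_cancel₀ (by positivity), Int.floor_sub_one,
    dyadicIndex]

lemma dyadicIndex_dyadicSibling (n : ℤ) (x : ℝ) :
    dyadicIndex n (dyadicSibling n x) =
      if Even (dyadicIndex n x) then dyadicIndex n x + 1 else dyadicIndex n x - 1 := by
  unfold dyadicSibling
  split_ifs
  exacts [dyadicIndex_add_zpow n x, dyadicIndex_sub_zpow n x]

lemma dyadicIndex_sub_one_dyadicSibling (n : ℤ) (x : ℝ) :
    dyadicIndex (n - 1) (dyadicSibling n x) = dyadicIndex (n - 1) x := by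
  rw [dyadicIndex_sub_one, dyadicIndex_sub_one, dyadicIndex_dyadicSibling]
  grind

lemma disjoint_dyadicInterval_sibling (n : ℤ) (x : ℝ) :
    Disjoint (dyadicInterval n (dyadicIndex n x))
      (dyadicInterval n (dyadicIndex n (dyadicSibling n x))) := by
  rw [Set.disjoint_left]
  intro y hy hy'
  rw [mem_dyadicInterval] at hy hy'
  rw [dyadicIndex_dyadicSibling] at hy'
  grind

lemma dyadicInterval_union_sibling (n : ℤ) (x : ℝ) :
    dyadicInterval n (dyadicIndex n x) ∪ dyadicInterval n (dyadicIndex n (dyadicSibling n x)) =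
      dyadicInterval (n - 1) (dyadicIndex (n - 1) x) := by
  ext y
  rw [Set.mem_union, mem_dyadicInterval, mem_dyadicInterval, mem_dyadicInterval,
    dyadicIndex_dyadicSibling, dyadicIndex_sub_one, dyadicIndex_sub_one]
  grind

lemma measurableSet_even_dyadicIndex (n : ℤ) : MeasurableSet {x | Even (dyadicIndex n x)} :=
  measurable_dyadicIndex n (.of_discrete (s := {m | Even m}))

lemma measurable_dyadicSibling (n : ℤ) : Measurable (dyadicSibling n) :=
  .ite (measurableSet_even_dyadicIndex n)
    (measurable_id.add_const _) (measurable_id.sub_const _)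

lemma measurePreserving_dyadicSibling (n : ℤ) : MeasurePreserving (dyadicSibling n) := by
  refine ⟨measurable_dyadicSibling n, Measure.ext fun s hs ↦ ?_⟩
  let E : Set ℝ := {x | Even (dyadicIndex n x)}
  have hE : MeasurableSet E := measurableSet_even_dyadicIndex n
  have preimage_eq : dyadicSibling n ⁻¹' s =
      (· + (2 : ℝ) ^ (-n)) ⁻¹' (s \ E) ∪ (· - (2 : ℝ) ^ (-n)) ⁻¹' (s ∩ E) := by
    ext x
    by_cases hx : Even (dyadicIndex n x)
    · simp [dyadicSibling, E, hx, dyadicIndex_add_zpow, dyadicIndex_sub_zpow, parity_simps,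
        -zpow_neg]
    · simp [dyadicSibling, E, hx, dyadicIndex_add_zpow, dyadicIndex_sub_zpow, parity_simps,
        Int.not_even_iff_odd.1 hx, -zpow_neg]
  have disjoint : Disjoint ((· + (2 : ℝ) ^ (-n)) ⁻¹' (s \ E))
      ((· - (2 : ℝ) ^ (-n)) ⁻¹' (s ∩ E)) := by
    rw [Set.disjoint_left]
    intro x
    simp +contextual [E, dyadicIndex_add_zpow, dyadicIndex_sub_zpow, parity_simps, -zpow_neg]
  rw [Measure.map_apply (measurable_dyadicSibling n) hs, preimage_eq,
    measure_union disjoint ((hs.inter hE).preimage (measurable_id.sub_const _)),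
    measure_preimage_add_right, (measurePreserving_sub_right volume _).measure_preimage
      (hs.inter hE).nullMeasurableSet, add_comm, measure_inter_add_sdiff s hE]

lemma two_mul_lintegral_eq_lintegral_add_sibling (n : ℤ) {u : ℝ → ℝ≥0∞} (hu : Measurable u) :
    2 * ∫⁻ x, u x = ∫⁻ x, u x + u (dyadicSibling n x) := by
  rw [lintegral_add_left hu, (measurePreserving_dyadicSibling n).lintegral_comp hu, two_mul]

lemma lintegral_eq_tsum_dyadicInterval (n : ℤ) (u : ℝ → ℝ≥0∞) :
    ∫⁻ x, u x = ∑' m, ∫⁻ x in dyadicInterval n m, u x := by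
  have disjoint : Pairwise (Function.onFun Disjoint (dyadicInterval n)) := by
    intro i j hij
    rw [Function.onFun, Set.disjoint_left]
    intro x hi hj
    rw [mem_dyadicInterval] at hi hj
    exact hij (hi.symm.trans hj)
  have cover : ⋃ m, dyadicInterval n m = Set.univ := by
    ext x
    simp [mem_dyadicInterval]
  rw [← lintegral_iUnion (measurableSet_dyadicInterval n) disjoint, cover, setLIntegral_univ]

lemma measurable_of_factorsThrough_dyadicIndex {β : Type*} [MeasurableSpace β] {n : ℤ}
    {u : ℝ → β} (hu : u.FactorsThrough (dyadicIndex n)) : Measurable u := by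
  have : Nonempty β := ⟨u 0⟩
  obtain ⟨v, rfl⟩ := (Function.factorsThrough_iff u).1 hu
  exact Measurable.of_discrete.comp (measurable_dyadicIndex n)

end DyadicIntervals

/-! ### Haar differences -/

/-- `u` is a Haar function at scale `n`: constant on the dyadic intervals of length `2^(-n)` and of
opposite signs on the two halves of each dyadic interval of length `2^(1-n)`. These are the
functions `dyadicDiff n f` with `f` locally integrable. -/
structure IsHaarDifference (n : ℤ) (u : ℝ → ℝ) : Prop where
  factorsThrough : u.FactorsThrough (dyadicIndex n)
  apply_sibling (x : ℝ) : u (dyadicSibling n x) = -u x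

lemma IsHaarDifference.measurable {n : ℤ} {u : ℝ → ℝ} (hu : IsHaarDifference n u) :
    Measurable u :=
  measurable_of_factorsThrough_dyadicIndex hu.factorsThrough

lemma IsHaarDifference.const_mul {n : ℤ} {u : ℝ → ℝ} (hu : IsHaarDifference n u) (c : ℝ) :
    IsHaarDifference n (fun x ↦ c * u x) where
  factorsThrough _ _ hxy := congrArg (c * ·) (hu.factorsThrough hxy)
  apply_sibling x := by rw [hu.apply_sibling, mul_neg]

lemma IsHaarDifference.indicator {n : ℤ} {u : ℝ → ℝ} (hu : IsHaarDifference n u) {s : Set ℝ}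
    (hs : (· ∈ s).FactorsThrough (dyadicIndex (n - 1))) : IsHaarDifference n (s.indicator u) where
  factorsThrough x y hxy := by
    have mem_eq : (x ∈ s) = (y ∈ s) := hs (dyadicIndex_eq_of_le (by lia) hxy)
    by_cases hx : x ∈ s <;> simp [Set.indicator, ← mem_eq, hx, hu.factorsThrough hxy]
  apply_sibling x := by
    have mem_eq : (dyadicSibling n x ∈ s) = (x ∈ s) := hs (dyadicIndex_sub_one_dyadicSibling n x)
    by_cases hx : x ∈ s <;> simp [mem_eq, hx, hu.apply_sibling]

section DyadicAvg

variable {f : ℝ → ℝ}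

lemma dyadicAvg_eq_setAverage (n : ℤ) (f : ℝ → ℝ) (x : ℝ) :
    dyadicAvg n f x = ⨍ y in dyadicInterval n (dyadicIndex n x), f y := by
  rw [setAverage_eq, volume_real_dyadicInterval, zpow_neg, inv_inv]
  rfl

lemma factorsThrough_dyadicAvg (n : ℤ) (f : ℝ → ℝ) :
    (dyadicAvg n f).FactorsThrough (dyadicIndex n) := by
  intro x y hxy
  rw [dyadicAvg_eq_setAverage, dyadicAvg_eq_setAverage, hxy]

lemma integrableOn_dyadicInterval (hf : LocallyIntegrable f) (n m : ℤ) :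
    IntegrableOn f (dyadicInterval n m) :=
  (hf.integrableOn_isCompact isCompact_Icc).mono_set Set.Ico_subset_Icc_self

lemma dyadicAvg_add_dyadicAvg_sibling (hf : LocallyIntegrable f) (n : ℤ) (x : ℝ) :
    dyadicAvg n f x + dyadicAvg n f (dyadicSibling n x) = 2 * dyadicAvg (n - 1) f x := by
  have integral_eq := setIntegral_union (disjoint_dyadicInterval_sibling n x)
    (measurableSet_dyadicInterval _ _) (integrableOn_dyadicInterval hf _ _)
    (integrableOn_dyadicInterval hf _ _)
  rw [dyadicInterval_union_sibling] at integral_eq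
  simp only [dyadicAvg_eq_setAverage, setAverage_eq, volume_real_dyadicInterval, smul_eq_mul,
    integral_eq, zpow_neg, inv_inv, zpow_sub_one₀ (two_ne_zero' ℝ)]
  ring

lemma isHaarDifference_dyadicDiff (hf : LocallyIntegrable f) (n : ℤ) :
    IsHaarDifference n (dyadicDiff n f) where
  factorsThrough x y hxy := by
    rw [dyadicDiff, dyadicDiff, factorsThrough_dyadicAvg n f hxy,
      factorsThrough_dyadicAvg (n - 1) f (dyadicIndex_eq_of_le (by lia) hxy)]
  apply_sibling x := by
    have parent_eq := factorsThrough_dyadicAvg (n - 1) f (dyadicIndex_sub_one_dyadicSibling n x)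
    rw [dyadicDiff, dyadicDiff, parent_eq]
    linarith [dyadicAvg_add_dyadicAvg_sibling hf n x]

lemma lintegral_sq_dyadicAvg_sub_one_add (hf : LocallyIntegrable f) (n : ℤ) :
    (∫⁻ x, ‖dyadicAvg (n - 1) f x‖ₑ ^ 2) + ∫⁻ x, ‖dyadicDiff n f x‖ₑ ^ 2 =
      ∫⁻ x, ‖dyadicAvg n f x‖ₑ ^ 2 := by
  have measurable_avg (m : ℤ) : Measurable (dyadicAvg m f) :=
    measurable_of_factorsThrough_dyadicIndex (factorsThrough_dyadicAvg m f)
  have pointwise (x : ℝ) : ‖dyadicAvg n f x‖ₑ ^ 2 + ‖dyadicAvg n f (dyadicSibling n x)‖ₑ ^ 2 =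
      2 * (‖dyadicAvg (n - 1) f x‖ₑ ^ 2 + ‖dyadicDiff n f x‖ₑ ^ 2) := by
    have avg_eq : dyadicAvg n f x = dyadicAvg (n - 1) f x + dyadicDiff n f x := by
      rw [dyadicDiff, add_sub_cancel]
    have sibling_eq :
        dyadicAvg n f (dyadicSibling n x) = dyadicAvg (n - 1) f x - dyadicDiff n f x := by
      linarith [dyadicAvg_add_dyadicAvg_sibling hf n x]
    rw [sibling_eq, avg_eq]
    simp only [enorm_eq_nnnorm]
    exact_mod_cast parallelogram_law_with_nnnorm ℝ (dyadicAvg (n - 1) f x) (dyadicDiff n f x)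
  have doubled :=
    two_mul_lintegral_eq_lintegral_add_sibling n ((measurable_avg n).enorm.pow_const 2)
  simp only [pointwise] at doubled
  rw [lintegral_const_mul' _ _ ofNat_ne_top,
    lintegral_add_left ((measurable_avg (n - 1)).enorm.pow_const 2)] at doubled
  exact ((ENNReal.mul_right_inj two_ne_zero ofNat_ne_top).1 doubled).symm

lemma sum_lintegral_sq_dyadicDiff_le (hf : LocallyIntegrable f) {m n : ℤ} (hmn : m ≤ n) :
    ∑ j ∈ Finset.Ioc m n, ∫⁻ x, ‖dyadicDiff j f x‖ₑ ^ 2 ≤ ∫⁻ x, ‖dyadicAvg n f x‖ₑ ^ 2 := by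
  induction n, hmn using Int.leInduction with
  | base => simp
  | succ n hn ih =>
    rw [← Finset.insert_Ioc_right_eq_Ioc_add_one hn, Finset.sum_insert (by simp), add_comm,
      ← lintegral_sq_dyadicAvg_sub_one_add hf (n + 1), add_sub_cancel_right]
    gcongr

lemma sq_dyadicAvg_le (hf : MemLp f 2) (n : ℤ) (x : ℝ) :
    dyadicAvg n f x ^ 2 ≤ dyadicAvg n (fun y ↦ f y ^ 2) x := by
  have volume_ne_zero : volume (dyadicInterval n (dyadicIndex n x)) ≠ 0 := by
    rw [← measureReal_ne_zero_iff (by simp [dyadicInterval]), volume_real_dyadicInterval]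
    positivity
  simp only [dyadicAvg_eq_setAverage]
  exact even_two.convexOn_pow.map_set_average_le (continuousOn_pow 2) isClosed_univ volume_ne_zero
    (by simp [dyadicInterval]) (by simp)
    (integrableOn_dyadicInterval (hf.locallyIntegrable one_le_two) _ _)
    hf.integrable_sq.integrableOn

lemma setLIntegral_sq_dyadicAvg_le (hf : MemLp f 2) (n m : ℤ) :
    ∫⁻ x in dyadicInterval n m, ‖dyadicAvg n f x‖ₑ ^ 2 ≤
      ∫⁻ x in dyadicInterval n m, ‖f x‖ₑ ^ 2 := by
  have sq_eq (t : ℝ) : ‖t‖ₑ ^ 2 = ENNReal.ofReal (t ^ 2) := by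
    rw [Real.enorm_eq_ofReal_abs, ← ENNReal.ofReal_pow (abs_nonneg t), sq_abs]
  let A := ⨍ y in dyadicInterval n m, f y ^ 2
  calc ∫⁻ x in dyadicInterval n m, ‖dyadicAvg n f x‖ₑ ^ 2
      ≤ ∫⁻ _ in dyadicInterval n m, ENNReal.ofReal A := by
        refine setLIntegral_mono measurable_const fun x hx ↦ ?_
        rw [sq_eq]
        refine ENNReal.ofReal_le_ofReal ((sq_dyadicAvg_le hf n x).trans_eq ?_)
        rw [dyadicAvg_eq_setAverage, mem_dyadicInterval.1 hx]
    _ = ENNReal.ofReal (∫ x in dyadicInterval n m, f x ^ 2) := by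
        rw [setLIntegral_const, mul_comm, ← ofReal_measureReal (by simp [dyadicInterval]),
          ← ENNReal.ofReal_mul measureReal_nonneg, ← smul_eq_mul,
          measure_smul_setAverage _ (by simp [dyadicInterval])]
    _ = ∫⁻ x in dyadicInterval n m, ‖f x‖ₑ ^ 2 := by
        simp only [sq_eq]
        exact ofReal_integral_eq_lintegral_ofReal hf.integrable_sq.integrableOn
          (ae_of_all _ fun x ↦ sq_nonneg (f x))

lemma lintegral_sq_dyadicAvg_le (hf : MemLp f 2) (n : ℤ) :
    ∫⁻ x, ‖dyadicAvg n f x‖ₑ ^ 2 ≤ ∫⁻ x, ‖f x‖ₑ ^ 2 := by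
  rw [lintegral_eq_tsum_dyadicInterval n, lintegral_eq_tsum_dyadicInterval n fun x ↦ ‖f x‖ₑ ^ 2]
  exact ENNReal.tsum_le_tsum (setLIntegral_sq_dyadicAvg_le hf n)

lemma tsum_lintegral_sq_dyadicDiff_le (hf : MemLp f 2) :
    ∑' j, ∫⁻ x, ‖dyadicDiff j f x‖ₑ ^ 2 ≤ eLpNorm f 2 ^ 2 := by
  have norm_eq : ∫⁻ x, ‖f x‖ₑ ^ 2 = eLpNorm f 2 ^ 2 := by
    simpa using (eLpNorm_nnreal_pow_eq_lintegral (f := f) (μ := volume) (two_ne_zero' ℝ≥0)).symm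
  rw [← norm_eq]
  refine le_of_tendsto' (ENNReal.summable.hasSum.comp (Finset.tendsto_Ioc_neg (R := ℤ)))
    fun l ↦ ?_
  exact (sum_lintegral_sq_dyadicDiff_le (hf.locallyIntegrable one_le_two) (by simp)).trans
    (lintegral_sq_dyadicAvg_le hf _)

end DyadicAvg

/-! ### The Bellman function -/

lemma norm_add_add_norm_sub_le {E : Type*} [NormedAddCommGroup E] [InnerProductSpace ℝ E]
    {v w : E} {c : ℝ} (hc : 0 ≤ c) (h : ‖w‖ ^ 2 ≤ ‖v‖ * c) :
    ‖v + w‖ + ‖v - w‖ ≤ 2 * ‖v‖ + c := by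
  refine le_of_sq_le_sq ?_ (by positivity)
  nlinarith [parallelogram_law_with_norm ℝ v w, sq_nonneg (‖v + w‖ - ‖v - w‖)]

/-- The vector `P + i F²` attached to a partial sum `F` and a partial paraproduct `P`. Its norm
`√(P² + F⁴)` is the Bellman function of the tree estimate. -/
def bellmanVector (F P : ℝ) : ℂ := P + (F ^ 2 : ℝ) * Complex.I

lemma enorm_le_enorm_bellmanVector (F P : ℝ) : ‖P‖ₑ ≤ ‖bellmanVector F P‖ₑ := by
  refine enorm_le_iff_norm_le.2 ?_
  simpa [bellmanVector, ← Complex.ofReal_pow] using Complex.abs_re_le_norm (bellmanVector F P)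

lemma sq_le_norm_bellmanVector (F P : ℝ) : F ^ 2 ≤ ‖bellmanVector F P‖ := by
  simpa [bellmanVector, ← Complex.ofReal_pow] using Complex.abs_im_le_norm (bellmanVector F P)

lemma norm_bellmanVector_add_norm_bellmanVector_le (F P a b : ℝ) :
    ‖bellmanVector (F + a) (P + F * b)‖ + ‖bellmanVector (F - a) (P - F * b)‖ ≤
      2 * ‖bellmanVector F P‖ + 6 * (‖a‖ ^ 2 + ‖b‖ ^ 2) := by
  let v := bellmanVector F P
  let w : ℂ := (F * b : ℝ) + (2 * F * a : ℝ) * Complex.I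
  let r : ℂ := (a ^ 2 : ℝ) * Complex.I
  have norm_r : ‖r‖ = a ^ 2 := by simp [r]
  have norm_w : ‖w‖ ^ 2 ≤ ‖v‖ * (b ^ 2 + 4 * a ^ 2) := by
    calc ‖w‖ ^ 2 = F ^ 2 * (b ^ 2 + 4 * a ^ 2) := by
          rw [Complex.sq_norm, Complex.normSq_add_mul_I]
          ring
      _ ≤ ‖v‖ * (b ^ 2 + 4 * a ^ 2) := by
          gcongr
          exact sq_le_norm_bellmanVector F P
  have add_eq : bellmanVector (F + a) (P + F * b) = v + w + r := by
    simp only [bellmanVector, v, w, r]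
    push_cast
    ring
  have sub_eq : bellmanVector (F - a) (P - F * b) = v - w + r := by
    simp only [bellmanVector, v, w, r]
    push_cast
    ring
  rw [add_eq, sub_eq, Real.norm_eq_abs, Real.norm_eq_abs, sq_abs, sq_abs]
  linarith [norm_add_le (v + w) r, norm_add_le (v - w) r, sq_nonneg b,
    norm_add_add_norm_sub_le (by positivity) norm_w]

lemma lintegral_enorm_bellmanVector_step_le {n : ℤ} {F P α β : ℝ → ℝ}
    (hF : F.FactorsThrough (dyadicIndex (n - 1))) (hP : P.FactorsThrough (dyadicIndex (n - 1)))
    (hα : IsHaarDifference n α) (hβ : IsHaarDifference n β) :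
    ∫⁻ x, ‖bellmanVector (F x + α x) (P x + F x * β x)‖ₑ ≤
      (∫⁻ x, ‖bellmanVector (F x) (P x)‖ₑ) + 3 * ((∫⁻ x, ‖α x‖ₑ ^ 2) + ∫⁻ x, ‖β x‖ₑ ^ 2) := by
  have hFm := measurable_of_factorsThrough_dyadicIndex hF
  have hPm := measurable_of_factorsThrough_dyadicIndex hP
  have hαm := hα.measurable
  have hβm := hβ.measurable
  have pointwise (F P a b : ℝ) :
      ‖bellmanVector (F + a) (P + F * b)‖ₑ + ‖bellmanVector (F - a) (P - F * b)‖ₑ ≤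
        2 * (‖bellmanVector F P‖ₑ + 3 * (‖a‖ₑ ^ 2 + ‖b‖ₑ ^ 2)) := by
    have := norm_bellmanVector_add_norm_bellmanVector_le F P a b
    simp only [enorm_eq_nnnorm]
    norm_cast
    rw [← NNReal.coe_le_coe]
    push_cast
    linarith
  have measurable_next :
      Measurable fun x ↦ ‖bellmanVector (F x + α x) (P x + F x * β x)‖ₑ := by
    unfold bellmanVector
    fun_prop
  have measurable_current : Measurable fun x ↦ ‖bellmanVector (F x) (P x)‖ₑ := by
    unfold bellmanVector
    fun_prop
  refine (ENNReal.mul_le_mul_iff_right two_ne_zero ofNat_ne_top).1 ?_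
  rw [two_mul_lintegral_eq_lintegral_add_sibling n measurable_next]
  simp only [hα.apply_sibling, hβ.apply_sibling, mul_neg, ← sub_eq_add_neg,
    hF (dyadicIndex_sub_one_dyadicSibling n _), hP (dyadicIndex_sub_one_dyadicSibling n _)]
  refine (lintegral_mono fun x ↦ pointwise (F x) (P x) (α x) (β x)).trans_eq ?_
  rw [lintegral_const_mul' _ _ ofNat_ne_top, lintegral_add_left measurable_current,
    lintegral_const_mul' _ _ ofNat_ne_top, lintegral_add_left (by fun_prop)]

/-! ### Paraproducts -/

/-- The discrete bilinear sum `∑_{m < i < j ≤ n} a i * b j`. -/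
def paraproduct {R : Type*} [NonUnitalNonAssocSemiring R] (a b : ℤ → R) (m n : ℤ) : R :=
  ∑ j ∈ Finset.Ioc m n, ∑ i ∈ Finset.Ioo m j, a i * b j

section Paraproduct

variable {R : Type*} [NonUnitalNonAssocSemiring R] (a b : ℤ → R) {m n : ℤ}

lemma sum_Ioc_add_one {M : Type*} [AddCommMonoid M] (u : ℤ → M) (hmn : m ≤ n) :
    ∑ j ∈ Finset.Ioc m (n + 1), u j = ∑ j ∈ Finset.Ioc m n, u j + u (n + 1) := by
  rw [← Finset.insert_Ioc_right_eq_Ioc_add_one hmn, Finset.sum_insert (by simp), add_comm]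

lemma paraproduct_add_one (hmn : m ≤ n) :
    paraproduct a b m (n + 1) =
      paraproduct a b m n + (∑ i ∈ Finset.Ioc m n, a i) * b (n + 1) := by
  rw [paraproduct, sum_Ioc_add_one _ hmn, Finset.Ioo_add_one_right_eq_Ioc, Finset.sum_mul,
    paraproduct]

lemma paraproduct_indicator {M N : ℤ} (hM : M ≤ m) (hN : n ≤ N) :
    paraproduct ((Set.Ioc m n).indicator a) ((Set.Ioc m n).indicator b) M N =
      paraproduct a b m n := by
  symm
  refine Finset.sum_subset_zero_on_sdiff (Finset.Ioc_subset_Ioc hM hN) (fun j hj ↦ ?_)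
    fun j hj ↦ Finset.sum_subset_zero_on_sdiff (Finset.Ioo_subset_Ioo_left hM) (fun i hi ↦ ?_)
      fun i hi ↦ ?_
  · have hj' : j ∉ Set.Ioc m n := by simpa using (Finset.mem_sdiff.1 hj).2
    simp [hj']
  · have hi' : i ∉ Set.Ioc m n := by grind
    simp [hi']
  · have hi' : i ∈ Set.Ioc m n := by grind
    have hj' : j ∈ Set.Ioc m n := by simpa using hj
    simp [hi', hj']

lemma paraproduct_mul_inv_mul {K : Type*} [Field K] {c : K} (hc : c ≠ 0) (a b : ℤ → K)
    (m n : ℤ) : paraproduct (fun i ↦ c * a i) (fun j ↦ c⁻¹ * b j) m n = paraproduct a b m n := by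
  refine Finset.sum_congr rfl fun j _ ↦ Finset.sum_congr rfl fun i _ ↦ ?_
  field_simp

end Paraproduct

/-! ### The tree estimate -/

section Tree

variable {α β : ℤ → ℝ → ℝ}

lemma factorsThrough_sum_Ioc (hα : ∀ j, IsHaarDifference j (α j)) (m n : ℤ) :
    (fun x ↦ ∑ i ∈ Finset.Ioc m n, α i x).FactorsThrough (dyadicIndex n) :=
  fun _ _ hxy ↦ Finset.sum_congr rfl fun _ hi ↦
    (hα _).factorsThrough (dyadicIndex_eq_of_le (Finset.mem_Ioc.1 hi).2 hxy)

lemma factorsThrough_paraproduct (hα : ∀ j, IsHaarDifference j (α j))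
    (hβ : ∀ j, IsHaarDifference j (β j)) (m n : ℤ) :
    (fun x ↦ paraproduct (α · x) (β · x) m n).FactorsThrough (dyadicIndex n) := by
  intro x y hxy
  refine Finset.sum_congr rfl fun j hj ↦ Finset.sum_congr rfl fun i hi ↦ ?_
  have hjn : j ≤ n := (Finset.mem_Ioc.1 hj).2
  have hin : i ≤ n := (Finset.mem_Ioo.1 hi).2.le.trans hjn
  simp only [(hα i).factorsThrough (dyadicIndex_eq_of_le hin hxy),
    (hβ j).factorsThrough (dyadicIndex_eq_of_le hjn hxy)]

lemma lintegral_enorm_bellmanVector_paraproduct_le (hα : ∀ j, IsHaarDifference j (α j))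
    (hβ : ∀ j, IsHaarDifference j (β j)) {m n : ℤ} (hmn : m ≤ n) :
    ∫⁻ x, ‖bellmanVector (∑ i ∈ Finset.Ioc m n, α i x) (paraproduct (α · x) (β · x) m n)‖ₑ ≤
      3 * ((∑ j ∈ Finset.Ioc m n, ∫⁻ x, ‖α j x‖ₑ ^ 2) +
        ∑ j ∈ Finset.Ioc m n, ∫⁻ x, ‖β j x‖ₑ ^ 2) := by
  induction n, hmn using Int.leInduction with
  | base => simp [bellmanVector, paraproduct]
  | succ n hn ih =>
    have step_le := lintegral_enorm_bellmanVector_step_le (n := n + 1)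
      (by simpa using factorsThrough_sum_Ioc hα m n)
      (by simpa using factorsThrough_paraproduct hα hβ m n) (hα (n + 1)) (hβ (n + 1))
    simp only [paraproduct_add_one _ _ hn, sum_Ioc_add_one _ hn]
    grw [ih] at step_le
    exact step_le.trans_eq (by ring)

lemma lintegral_enorm_paraproduct_le (hα : ∀ j, IsHaarDifference j (α j))
    (hβ : ∀ j, IsHaarDifference j (β j)) {m n : ℤ} (hmn : m ≤ n) :
    ∫⁻ x, ‖paraproduct (α · x) (β · x) m n‖ₑ ≤
      3 * ((∑' j, ∫⁻ x, ‖α j x‖ₑ ^ 2) + ∑' j, ∫⁻ x, ‖β j x‖ₑ ^ 2) := by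
  refine (lintegral_mono fun x ↦ enorm_le_enorm_bellmanVector _ _).trans
    ((lintegral_enorm_bellmanVector_paraproduct_le hα hβ hmn).trans ?_)
  gcongr <;> exact ENNReal.sum_le_tsum _

end Tree

/-! ### Stopping times -/

/-- `τ` is a stopping time: it is constant on the dyadic interval of length `2^(-τ x)` around each
point `x`. -/
def IsDyadicStoppingTime (τ : ℝ → ℤ) : Prop :=
  ∀ ⦃x y⦄, dyadicIndex (τ x) y = dyadicIndex (τ x) x → τ y = τ x

/-- The part of the sequence of functions `α` at the scales in `(σ, τ]`. -/
def strip (σ τ : ℝ → ℤ) (α : ℤ → ℝ → ℝ) (j : ℤ) : ℝ → ℝ :=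
  {x | j ∈ Set.Ioc (σ x) (τ x)}.indicator (α j)

section StoppingTime

variable {σ τ : ℝ → ℤ} {α β : ℤ → ℝ → ℝ}

lemma IsStoppingJump.isDyadicStoppingTime {Nk : ℕ → ℝ → ℤ} (h : IsStoppingJump Nk) (k : ℕ) :
    IsDyadicStoppingTime (Nk k) :=
  fun x y hxy ↦ h.2.2 k x y (mem_dyadicInterval.2 hxy)

lemma IsDyadicStoppingTime.le_iff_le (hτ : IsDyadicStoppingTime τ) {n : ℤ} {x y : ℝ}
    (hxy : dyadicIndex n x = dyadicIndex n y) : τ x ≤ n ↔ τ y ≤ n := by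
  constructor <;> intro h
  · rwa [hτ (dyadicIndex_eq_of_le h hxy.symm)]
  · rwa [hτ (dyadicIndex_eq_of_le h hxy)]

lemma isHaarDifference_strip (hσ : IsDyadicStoppingTime σ) (hτ : IsDyadicStoppingTime τ)
    (hα : ∀ j, IsHaarDifference j (α j)) (j : ℤ) : IsHaarDifference j (strip σ τ α j) := by
  refine (hα j).indicator fun x y hxy ↦ ?_
  have hσ' := hσ.le_iff_le hxy
  have hτ' := hτ.le_iff_le hxy
  simp only [Set.mem_ofPred_eq, Set.mem_Ioc, eq_iff_iff]
  lia

lemma eventually_paraproduct_strip_eq (σ τ : ℝ → ℤ) (α β : ℤ → ℝ → ℝ) (x : ℝ) :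
    ∀ᶠ l : ℕ in atTop, paraproduct (strip σ τ α · x) (strip σ τ β · x) (-l) l =
      paraproduct (α · x) (β · x) (σ x) (τ x) := by
  filter_upwards [eventually_ge_atTop (max (-σ x) (τ x)).toNat] with l hl
  exact paraproduct_indicator (α · x) (β · x) (by lia) (by lia)

lemma measurable_paraproduct (hσ : IsDyadicStoppingTime σ) (hτ : IsDyadicStoppingTime τ)
    (hα : ∀ j, IsHaarDifference j (α j)) (hβ : ∀ j, IsHaarDifference j (β j)) :
    Measurable fun x ↦ paraproduct (α · x) (β · x) (σ x) (τ x) :=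
  measurable_of_tendsto_metrizable
    (fun l : ℕ ↦ measurable_of_factorsThrough_dyadicIndex (factorsThrough_paraproduct
      (isHaarDifference_strip hσ hτ hα) (isHaarDifference_strip hσ hτ hβ) (-l) l))
    (tendsto_pi_nhds.2 fun x ↦ tendsto_nhds_of_eventually_eq
      (eventually_paraproduct_strip_eq σ τ α β x))

lemma lintegral_enorm_paraproduct_stopped_le (hσ : IsDyadicStoppingTime σ)
    (hτ : IsDyadicStoppingTime τ) (hα : ∀ j, IsHaarDifference j (α j))
    (hβ : ∀ j, IsHaarDifference j (β j)) :
    ∫⁻ x, ‖paraproduct (α · x) (β · x) (σ x) (τ x)‖ₑ ≤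
      3 * ((∑' j, ∫⁻ x, ‖strip σ τ α j x‖ₑ ^ 2) + ∑' j, ∫⁻ x, ‖strip σ τ β j x‖ₑ ^ 2) := by
  have hα' := isHaarDifference_strip hσ hτ hα
  have hβ' := isHaarDifference_strip hσ hτ hβ
  calc ∫⁻ x, ‖paraproduct (α · x) (β · x) (σ x) (τ x)‖ₑ
      ≤ liminf (fun l : ℕ ↦
          ∫⁻ x, ‖paraproduct (strip σ τ α · x) (strip σ τ β · x) (-l) l‖ₑ) atTop :=
        lintegral_enorm_le_liminf_of_tendsto
          (ae_of_all _ fun x ↦ tendsto_nhds_of_eventually_eq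
            (eventually_paraproduct_strip_eq σ τ α β x))
          fun l ↦ (measurable_of_factorsThrough_dyadicIndex
            (factorsThrough_paraproduct hα' hβ' (-l) l)).enorm.aemeasurable
    _ ≤ _ := liminf_le_of_le (by isBoundedDefault) fun b hb ↦ by
        obtain ⟨l, hl⟩ := hb.exists
        exact hl.trans (lintegral_enorm_paraproduct_le hα' hβ' (by lia))

/-! ### Summation over the strips -/

lemma tsum_indicator_Ioc_le {N : ℕ → ℤ} (hN : Monotone N) (u : ℤ → ℝ≥0∞) (j : ℤ) :
    ∑' k, (Set.Ioc (N k) (N (k + 1))).indicator u j ≤ u j := by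
  have disjoint : Pairwise (Function.onFun Disjoint fun k ↦ Set.Ioc (N k) (N (k + 1))) := by
    simpa using hN.pairwise_disjoint_on_Ioc_succ
  have union := congrFun (indicator_iUnion_of_pairwise_disjoint _ disjoint u) j
  exact union.symm.trans_le (Set.indicator_le_self _ u j)

lemma tsum_tsum_lintegral_strip_le {N : ℕ → ℝ → ℤ} (hN : ∀ k, IsDyadicStoppingTime (N k))
    (hN' : ∀ x, Monotone (N · x)) (hα : ∀ j, IsHaarDifference j (α j)) :
    ∑' k, ∑' j, ∫⁻ x, ‖strip (N k) (N (k + 1)) α j x‖ₑ ^ 2 ≤ ∑' j, ∫⁻ x, ‖α j x‖ₑ ^ 2 := by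
  rw [ENNReal.tsum_comm]
  refine ENNReal.tsum_le_tsum fun j ↦ ?_
  rw [← lintegral_tsum fun k ↦ ((isHaarDifference_strip (hN k) (hN (k + 1)) hα
    j).measurable.enorm.pow_const 2).aemeasurable]
  refine lintegral_mono fun x ↦ ?_
  refine le_trans (ENNReal.tsum_le_tsum fun k ↦ ?_)
    (tsum_indicator_Ioc_le (hN' x) (fun j ↦ ‖α j x‖ₑ ^ 2) j)
  by_cases hj : j ∈ Set.Ioc (N k x) (N (k + 1) x) <;> simp_all [strip]

lemma lintegral_tsum_enorm_paraproduct_le {N : ℕ → ℝ → ℤ}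
    (hN : ∀ k, IsDyadicStoppingTime (N k)) (hN' : ∀ x, Monotone (N · x))
    (hα : ∀ j, IsHaarDifference j (α j)) (hβ : ∀ j, IsHaarDifference j (β j)) :
    ∫⁻ x, ∑' k, ‖paraproduct (α · x) (β · x) (N k x) (N (k + 1) x)‖ₑ ≤
      3 * ((∑' j, ∫⁻ x, ‖α j x‖ₑ ^ 2) + ∑' j, ∫⁻ x, ‖β j x‖ₑ ^ 2) := by
  rw [lintegral_tsum fun k ↦
    (measurable_paraproduct (hN k) (hN (k + 1)) hα hβ).enorm.aemeasurable]
  refine (ENNReal.tsum_le_tsum fun k ↦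
    lintegral_enorm_paraproduct_stopped_le (hN k) (hN (k + 1)) hα hβ).trans ?_
  rw [ENNReal.tsum_mul_left, ENNReal.tsum_add]
  gcongr
  · exact tsum_tsum_lintegral_strip_le hN hN' hα
  · exact tsum_tsum_lintegral_strip_le hN hN' hβ

end StoppingTime

/-! ### From the sum of squares to the product -/

lemma le_two_mul_mul_of_forall_scaling {x : ℝ≥0∞} {K a b : ℝ≥0}
    (h : ∀ c : ℝ≥0, c ≠ 0 → x ≤ ↑(K * ((c * a) ^ 2 + (c⁻¹ * b) ^ 2))) :
    x ≤ ↑(2 * K * a * b) := by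
  have perturbed (ε : ℝ≥0) (hε : 0 < ε) : x ≤ ↑(K * ((b + ε) * a + (a + ε) * b)) := by
    -- The optimal `c²` is `b / a`, which need not be defined or nonzero unless perturbed.
    let r := (b + ε) / (a + ε)
    have sq_le : r * a ^ 2 ≤ (b + ε) * a := by
      calc r * a ^ 2 ≤ r * ((a + ε) * a) := by
            rw [sq]
            gcongr
            exact le_self_add
        _ = (b + ε) * a := by
            simp only [r]
            field_simp
    have inv_sq_le : r⁻¹ * b ^ 2 ≤ (a + ε) * b := by
      calc r⁻¹ * b ^ 2 ≤ r⁻¹ * ((b + ε) * b) := by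
            rw [sq]
            gcongr
            exact le_self_add
        _ = (a + ε) * b := by
            simp only [r]
            field_simp
    have hr : NNReal.sqrt r ≠ 0 := by positivity
    grw [h (NNReal.sqrt r) hr, mul_pow, mul_pow, inv_pow, NNReal.sq_sqrt, sq_le, inv_sq_le]
  have limit : Tendsto (fun ε : ℝ≥0 ↦ ((K * ((b + ε) * a + (a + ε) * b) : ℝ≥0) : ℝ≥0∞)) (𝓝[>] 0)
      (𝓝 ↑(2 * K * a * b)) := by
    refine ENNReal.tendsto_coe.2 (tendsto_nhdsWithin_of_tendsto_nhds ?_)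
    have : Continuous fun ε : ℝ≥0 ↦ K * ((b + ε) * a + (a + ε) * b) := by fun_prop
    convert this.tendsto 0 using 2
    ring
  exact ge_of_tendsto limit (by filter_upwards [self_mem_nhdsWithin] with ε hε using perturbed ε hε)

lemma lintegral_tsum_enorm_paraproduct_le_mul {N : ℕ → ℝ → ℤ}
    (hN : ∀ k, IsDyadicStoppingTime (N k)) (hN' : ∀ x, Monotone (N · x)) {α β : ℤ → ℝ → ℝ}
    (hα : ∀ j, IsHaarDifference j (α j)) (hβ : ∀ j, IsHaarDifference j (β j)) {a b : ℝ≥0}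
    (ha : ∑' j, ∫⁻ x, ‖α j x‖ₑ ^ 2 ≤ a ^ 2) (hb : ∑' j, ∫⁻ x, ‖β j x‖ₑ ^ 2 ≤ b ^ 2) :
    ∫⁻ x, ∑' k, ‖paraproduct (α · x) (β · x) (N k x) (N (k + 1) x)‖ₑ ≤ 6 * a * b := by
  have scale_le {γ : ℤ → ℝ → ℝ} {d : ℝ≥0} (hd : ∑' j, ∫⁻ x, ‖γ j x‖ₑ ^ 2 ≤ d ^ 2) (c : ℝ≥0) :
      ∑' j, ∫⁻ x, ‖(c : ℝ) * γ j x‖ₑ ^ 2 ≤ (c * d) ^ 2 := by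
    simp only [enorm_mul, mul_pow, NNReal.enorm_eq]
    simp only [lintegral_const_mul' _ _ (pow_ne_top coe_ne_top), ENNReal.tsum_mul_left]
    gcongr
  have scaled (c : ℝ≥0) (hc : c ≠ 0) :
      ∫⁻ x, ∑' k, ‖paraproduct (α · x) (β · x) (N k x) (N (k + 1) x)‖ₑ ≤
        ((3 * ((c * a) ^ 2 + (c⁻¹ * b) ^ 2) : ℝ≥0) : ℝ≥0∞) := by
    have bound := lintegral_tsum_enorm_paraproduct_le hN hN'
      (fun j ↦ (hα j).const_mul c) (fun j ↦ (hβ j).const_mul ↑c⁻¹)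
    simp only [NNReal.coe_inv, paraproduct_mul_inv_mul (NNReal.coe_ne_zero.2 hc)] at bound
    refine bound.trans ?_
    rw [← NNReal.coe_inv]
    push_cast
    gcongr
    exacts [scale_le ha c, scale_le hb c⁻¹]
  exact (le_two_mul_mul_of_forall_scaling scaled).trans_eq (by norm_num)

/-- The stopping-time case of the diagonal discrete bilinear estimate
(`r = s = p = q = 2`, `t = 1`). -/
theorem stopping_time_diagonal_bilinear :
    ∃ C : ℝ≥0, 0 < C ∧
      ∀ (f g : ℝ → ℝ), MemLp f 2 → MemLp g 2 →
      ∀ (Nk : ℕ → ℝ → ℤ), IsStoppingJump Nk →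
      (∫⁻ x : ℝ, ∑' k : ℕ, ENNReal.ofReal
          |∑ j ∈ Finset.Ioc (Nk k x) (Nk (k + 1) x),
            ∑ i ∈ Finset.Ioo (Nk k x) j, dyadicDiff i f x * dyadicDiff j g x|)
        ≤ (C : ℝ≥0∞) * eLpNorm f 2 volume * eLpNorm g 2 volume := by
  refine ⟨6, by norm_num, fun f g hf hg Nk hNk ↦ ?_⟩
  have hNk' (x : ℝ) : Monotone (Nk · x) := monotone_nat_of_le_succ (hNk.2.1 · x)
  have haar {h : ℝ → ℝ} (hh : MemLp h 2) (j : ℤ) : IsHaarDifference j (dyadicDiff j h) :=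
    isHaarDifference_dyadicDiff (hh.locallyIntegrable one_le_two) j
  have bessel_f := tsum_lintegral_sq_dyadicDiff_le hf
  have bessel_g := tsum_lintegral_sq_dyadicDiff_le hg
  lift eLpNorm f 2 volume to ℝ≥0 using hf.eLpNorm_ne_top with a
  lift eLpNorm g 2 volume to ℝ≥0 using hg.eLpNorm_ne_top with b
  simp only [← Real.enorm_eq_ofReal_abs]
  exact lintegral_tsum_enorm_paraproduct_le_mul hNk.isDyadicStoppingTime hNk' (haar hf) (haar hg)
    bessel_f bessel_g

end
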